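/- arXiv:2404.00175 — 7 statements merged into one kernel-verified Lean document; each statement's English description precedes it below -/
import Mathlib

section
/- Let R be a commutative ring and let v₁, v₂, v₃ ∈ R³, with coordinates (v_i)₁, (v_i)₂, (v_i)₃. For i ∈ {1,2,3} (indices taken mod 3 in {1,2,3}) set v' = v_{i+1}, v'' = v_{i+2} and define the conic q_i(x,y,z) = (v')₃(v'')₃((v')₂(v'')₁ − (v'')₂(v')₁)·xy + (v')₁(v'')₁((v')₃(v'')₂ − (v'')₃(v')₂)·yz + (v')₂(v'')₂((v')₁(v'')₃ − (v'')₁(v')₃)·zx. Then for every m ∈ {1,2,3} and every (x,y,z) ∈ R³ one has (v₁)_m · |v₁ e_m p| · q₁(x,y,z) + (v₂)_m · |v₂ e_m p| · q₂(x,y,z) + (v₃)_m · |v₃ e_m p| · q₃(x,y,z) = 0, where p = (x,y,z) and e₁, e₂, e₃ are the standard basis vectors of R³. (This is the linear relation among the three cubics ℓ_{i, j+4}·q_i, with coefficients given by the m-th coordinates of v₁, v₂, v₃, which the paper uses to produce the relations among the three paths from the vertex (1,0) of its quiver, for the point configuration normalized so that p₄, p₅, p₆ are the standard basis vectors.) 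-/
/-- The determinant of the 3 × 3 matrix over a commutative ring `R`
whose columns are `u`, `v`, `w : Fin 3 → R`. -/
def det3 {R : Type*} [CommRing R] (u v w : Fin 3 → R) : R :=
  Matrix.det (Matrix.of fun i j => ![u, v, w] j i)

/-- The conic
`q(x,y,z) = (v')₃(v'')₃((v')₂(v'')₁ − (v'')₂(v')₁)·xy
  + (v')₁(v'')₁((v')₃(v'')₂ − (v'')₃(v')₂)·yz
  + (v')₂(v'')₂((v')₁(v'')₃ − (v'')₁(v')₃)·zx`
(coordinates of a vector `v : Fin 3 → R` indexed by `0, 1, 2`). -/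
def conic {R : Type*} [CommRing R] (v' v'' : Fin 3 → R) (x y z : R) : R :=
  v' 2 * v'' 2 * (v' 1 * v'' 0 - v'' 1 * v' 0) * (x * y)
    + v' 0 * v'' 0 * (v' 2 * v'' 1 - v'' 2 * v' 1) * (y * z)
    + v' 1 * v'' 1 * (v' 0 * v'' 2 - v'' 0 * v' 2) * (z * x)

/-!
Let `σ` be the standard quadratic Cremona transformation. It carries the conics through
`e₁, e₂, e₃` to lines, so that `qᵢ(p) = |σ(p) σ(vᵢ₊₁) σ(vᵢ₊₂)|`, and the factor `vₘ · |v eₘ p|`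
is a linear form `L` evaluated at `σ(v)`. By Cramer's rule the sum equals
`|σ(v₁) σ(v₂) σ(v₃)| · L(σ(p))`, and `L(σ(p)) = pₘ · |p eₘ p| = 0`.
-/

section

open scoped Matrix

variable {R : Type*} [CommRing R]

theorem det3_eq_cofactor_expansion (u v w : Fin 3 → R) :
    det3 u v w =
      u 0 * (v 1 * w 2 - v 2 * w 1) - u 1 * (v 0 * w 2 - v 2 * w 0)
        + u 2 * (v 0 * w 1 - v 1 * w 0) := by
  simp only [det3, Matrix.det_fin_three, Matrix.of_apply, Matrix.cons_val]
  ring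

theorem det3_self_right (u w : Fin 3 → R) : det3 u w u = 0 :=
  Matrix.det_zero_of_column_eq (i := 0) (j := 2) (by decide) fun _ => rfl

theorem det3_add_one_add_two_eq_cramer (s : Fin 3 → Fin 3 → R) (b : Fin 3 → R) (i : Fin 3) :
    det3 b (s (i + 1)) (s (i + 2)) = (Matrix.of s)ᵀ.cramer b i := by
  rw [Matrix.cramer_transpose_apply]
  fin_cases i <;>
    simp only [det3_eq_cofactor_expansion, Matrix.det_fin_three, Matrix.updateRow_apply,
      Matrix.of_apply, Fin.reduceFinMk, Fin.reduceAdd, Fin.reduceEq, ↓reduceIte] <;>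
    ring

theorem sum_det3_smul (s : Fin 3 → Fin 3 → R) (b : Fin 3 → R) :
    ∑ i, det3 b (s (i + 1)) (s (i + 2)) • s i = (Matrix.of s).det • b := by
  calc ∑ i, det3 b (s (i + 1)) (s (i + 2)) • s i
      = (Matrix.of s)ᵀ *ᵥ (Matrix.of s)ᵀ.cramer b := by
        simp only [det3_add_one_add_two_eq_cramer, Matrix.mulVec_transpose, Matrix.vecMul_eq_sum]
        rfl
    _ = (Matrix.of s).det • b := by rw [Matrix.mulVec_cramer, Matrix.det_transpose]

/-- The standard quadratic Cremona transformation `(x, y, z) ↦ (yz, zx, xy)`, as a polynomial map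
of `R³`, with the coordinates indexed cyclically; it linearizes the conics through the three
coordinate points. -/
def cremona (v : Fin 3 → R) : Fin 3 → R := fun k => v (k + 1) * v (k + 2)

theorem conic_eq_det3_cremona (v' v'' : Fin 3 → R) (x y z : R) :
    conic v' v'' x y z = det3 (cremona ![x, y, z]) (cremona v') (cremona v'') := by
  simp only [conic, det3_eq_cofactor_expansion, cremona, Matrix.cons_val, Fin.reduceAdd]
  ring

/-- The linear form whose pullback along `cremona` is `v ↦ vₘ · |v eₘ p|`. -/
def cremonaForm (m : Fin 3) (p : Fin 3 → R) : (Fin 3 → R) →ₗ[R] R :=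
  p (m + 1) • LinearMap.proj (m + 1) - p (m + 2) • LinearMap.proj (m + 2)

theorem cremonaForm_cremona (m : Fin 3) (p v : Fin 3 → R) :
    cremonaForm m p (cremona v) = v m * det3 v (Pi.single m 1) p := by
  fin_cases m <;>
    simp only [cremonaForm, cremona, det3_eq_cofactor_expansion, Pi.single_apply,
      LinearMap.sub_apply, LinearMap.smul_apply, LinearMap.proj_apply, smul_eq_mul,
      Fin.reduceFinMk, Fin.reduceAdd, Fin.reduceEq, ↓reduceIte] <;>
    ring

theorem cremonaForm_cremona_self (m : Fin 3) (p : Fin 3 → R) :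
    cremonaForm m p (cremona p) = 0 := by
  rw [cremonaForm_cremona, det3_self_right, mul_zero]

end

/-- For `v₁, v₂, v₃ ∈ R³`, every `m ∈ {1,2,3}` and every `(x,y,z) ∈ R³`, one has
`(v₁)ₘ·|v₁ eₘ p|·q₁ + (v₂)ₘ·|v₂ eₘ p|·q₂ + (v₃)ₘ·|v₃ eₘ p|·q₃ = 0`,
where `p = (x,y,z)`, `eₘ` is the `m`-th standard basis vector, and
`qᵢ` is the conic built from `v_{i+1}, v_{i+2}` (indices mod 3). -/
theorem stmt2 {R : Type*} [CommRing R] (v : Fin 3 → (Fin 3 → R)) (m : Fin 3) (x y z : R) :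
    ∑ i : Fin 3,
        v i m * det3 (v i) (Pi.single m 1) ![x, y, z] * conic (v (i + 1)) (v (i + 2)) x y z
      = 0 := by
  let p := ![x, y, z]
  let s i := cremona (v i)
  calc ∑ i, v i m * det3 (v i) (Pi.single m 1) p * conic (v (i + 1)) (v (i + 2)) x y z
      = ∑ i, det3 (cremona p) (s (i + 1)) (s (i + 2)) * cremonaForm m p (s i) := by
        simp only [p, s, conic_eq_det3_cremona, cremonaForm_cremona, mul_comm]
    _ = cremonaForm m p (∑ i, det3 (cremona p) (s (i + 1)) (s (i + 2)) • s i) := by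
        simp only [map_sum, map_smul, smul_eq_mul]
    _ = (Matrix.of s).det * cremonaForm m p (cremona p) := by
        rw [sum_det3_smul, map_smul, smul_eq_mul]
    _ = 0 := by rw [cremonaForm_cremona_self, mul_zero]
end

section
/- Every nonempty proper subset S ⊊ Q₀ that is closed under the arrows of Q (i.e., for every arrow x_{i,j,k}, if (i, j) ∈ S then (i + k, j + 1) ∈ S) satisfies Σ_{v ∈ S} θ(v) > 0. (This is the combinatorial content of the paper's claim that every point of the dense torus (G_m)^{Q₁}, i.e., every representation of Q of dimension vector (1,…,1) with all arrow maps nonzero, is θ-stable.) -/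
/-- The stability parameter `θ : Q₀ → ℤ` on the vertex set
`Q₀ = ℤ/3ℤ × ℤ/3ℤ`: `θ(i,0) = −11`, `θ(0,1) = θ(1,1) = 3`, `θ(2,1) = 6`,
`θ(i,2) = 7`. -/
def theta : ZMod 3 × ZMod 3 → ℤ := fun v =>
  if v.2 = 0 then -11
  else if v.2 = 1 then (if v.1 = 2 then 6 else 3)
  else 7

/-!
The weights `θ` sum to zero, are negative exactly on the layer `j = 0`, and every vertex of positive
weight can be reached from every vertex of negative weight. A closed set `S` that misses the layer
`j = 0` therefore has only positive weights. One that meets this layer contains all vertices of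
positive weight, so its complement has only negative weights; the complement is nonempty and
`θ(S) = -θ(Sᶜ)`.
-/

open Relation

theorem pred_of_reflTransGen {V : Type*} {r : V → V → Prop} {P : V → Prop}
    (hP : ∀ v w, r v w → P v → P w) {v w : V} (hvw : ReflTransGen r v w) (hv : P v) : P w := by
  induction hvw with
  | refl => exact hv
  | tail _ hstep ih => exact hP _ _ hstep ih

section WeightedVertices

variable {V M : Type*} [Fintype V] [AddCommMonoid M] [LinearOrder M] [IsOrderedCancelAddMonoid M]
  {θ : V → M} {S : Finset V}

theorem sum_pos_of_forall_nonneg_mem_of_nonpos_mem (hθ : ∑ v, θ v = 0) (hne : S.Nonempty)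
    (hproper : S ≠ Finset.univ) (hS : ∀ v ∈ S, θ v ≤ 0 → ∀ w, 0 ≤ θ w → w ∈ S) :
    0 < ∑ v ∈ S, θ v := by
  classical
  by_cases hnonpos : ∃ v ∈ S, θ v ≤ 0
  · obtain ⟨v, hvS, hv⟩ := hnonpos
    have hcompl_nonempty : Sᶜ.Nonempty := by
      rwa [Finset.nonempty_iff_ne_empty, Ne, Finset.compl_eq_empty_iff]
    have hneg_of_mem_compl (w : V) (hw : w ∈ Sᶜ) : θ w < 0 :=
      lt_of_not_ge fun hw' => Finset.mem_compl.mp hw (hS v hvS hv w hw')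
    have hcompl_neg : ∑ w ∈ Sᶜ, θ w < 0 := Finset.sum_neg hneg_of_mem_compl hcompl_nonempty
    have hsplit : ∑ w ∈ S, θ w + ∑ w ∈ Sᶜ, θ w = 0 := (Finset.sum_add_sum_compl S θ).trans hθ
    exact lt_of_not_ge fun hle => (add_neg_of_nonpos_of_neg hle hcompl_neg).ne hsplit
  · push Not at hnonpos
    exact Finset.sum_pos hnonpos hne

theorem stmt5_general {r : V → V → Prop} (hθ : ∑ v, θ v = 0)
    (hreach : ∀ v w, θ v ≤ 0 → 0 ≤ θ w → ReflTransGen r v w) (hne : S.Nonempty)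
    (hproper : S ≠ Finset.univ) (hclosed : ∀ v w, r v w → v ∈ S → w ∈ S) :
    0 < ∑ v ∈ S, θ v :=
  sum_pos_of_forall_nonneg_mem_of_nonpos_mem hθ hne hproper fun v hvS hv w hw =>
    pred_of_reflTransGen (P := (· ∈ S)) hclosed (hreach v w hv hw) hvS

end WeightedVertices

/-- The arrows `x_{i,j,k} : (i, j) → (i + k, j + 1)`, `j ∈ {0, 1}`, of the three-layer quiver `Q`,
as a relation on its vertices. The layers are copies of any `G` with an addition; the quiver of
`stmt5` is the case `G = ℤ/3ℤ`. -/
inductive LayerArrow {G : Type*} [Add G] : G × ZMod 3 → G × ZMod 3 → Prop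
  | x (i k : G) (j : ZMod 3) (hj : j = 0 ∨ j = 1) : LayerArrow (i, j) (i + k, j + 1)

namespace LayerArrow

theorem of_layer {G : Type*} [AddGroup G] (i m : G) {j : ZMod 3} (hj : j = 0 ∨ j = 1) :
    LayerArrow (i, j) (m, j + 1) := by
  simpa only [add_neg_cancel_left] using x i (-i + m) j hj

theorem reflTransGen_of_layer_zero {G : Type*} [AddGroup G] {v w : G × ZMod 3} (hv : v.2 = 0)
    (hw : w.2 ≠ 0) : ReflTransGen LayerArrow v w := by
  obtain ⟨i, j⟩ := v
  obtain ⟨m, l⟩ := w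
  obtain rfl : j = 0 := hv
  have hfirst (m' : G) : LayerArrow (i, 0) (m', 1) := of_layer i m' (.inl rfl)
  have hlayer : ∀ l : ZMod 3, l ≠ 0 → l = 1 ∨ l = 2 := by decide
  obtain rfl | rfl := hlayer l hw
  · exact .single (hfirst m)
  · exact (ReflTransGen.single (hfirst m)).tail (of_layer m m (.inr rfl))

end LayerArrow

theorem sum_theta : ∑ v, theta v = 0 := by decide

theorem theta_nonpos_iff (v : ZMod 3 × ZMod 3) : theta v ≤ 0 ↔ v.2 = 0 := by decide +revert

theorem theta_nonneg_iff (v : ZMod 3 × ZMod 3) : 0 ≤ theta v ↔ v.2 ≠ 0 := by decide +revert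

/-- Every nonempty proper subset `S ⊊ Q₀` that is closed under the arrows
`x_{i,j,k} : (i,j) → (i+k, j+1)` (for `i, k ∈ ℤ/3ℤ` and `j ∈ {0,1}`) of the
quiver `Q` satisfies `Σ_{v ∈ S} θ(v) > 0`. -/
theorem stmt5 (S : Finset (ZMod 3 × ZMod 3)) (hne : S.Nonempty)
    (hproper : S ≠ Finset.univ)
    (hclosed : ∀ i k j : ZMod 3, (j = 0 ∨ j = 1) →
      (i, j) ∈ S → (i + k, j + 1) ∈ S) :
    0 < ∑ v ∈ S, theta v :=
  stmt5_general sum_theta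
    (fun v w hv hw => LayerArrow.reflTransGen_of_layer_zero
      ((theta_nonpos_iff v).1 hv) ((theta_nonneg_iff w).1 hw))
    hne hproper fun _ _ ⟨i, k, j, hj⟩ => hclosed i k j hj
end

section
/- Let V and E be nonempty finite types with maps s, t : E → V forming a connected quiver, and let G be a commutative group. Define γ : (V → G) → (E → G) by γ(λ)(e) = λ(t e) · λ(s e)⁻¹. Then the quotient group (E → G) / range(γ) is isomorphic to G^{|E| − |V| + 1}, i.e., to the group of functions from a set of cardinality |E| − |V| + 1 to G; in particular range(γ) is a direct factor of (E → G). (This is the paper's identification of the torus T = coker(γ) as G_m^{|Q₁| − |Q₀| + 1} and the splitting of the sequence 1 → K → (G_m)^{Q₁} → T → 1.) -/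
/-- The group homomorphism `γ : (V → G) → (E → G)`,
`γ(λ)(e) = λ(t e) · λ(s e)⁻¹`, attached to a quiver `(V, E, s, t)` and a
commutative group `G`. -/
def gammaHom {V E : Type*} (s t : E → V) (G : Type*) [CommGroup G] :
    (V → G) →* (E → G) where
  toFun lam := fun e => lam (t e) * (lam (s e))⁻¹
  map_one' := by ext e; simp
  map_mul' a b := by
    ext e
    simp [mul_inv, mul_mul_mul_comm, mul_comm]

/-!
Fix a root `r` and, for every other vertex `v`, an arrow joining `v` to a vertex closer to `r`.
These arrows form a spanning tree `T`, in bijection with the vertices other than `r`. A potential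
`V → G` can be prescribed along the arrows of `T`, recursively in the distance to `r`, and the
prescription determines it up to its value at `r`. Hence restriction to `T` maps the image of `γ`
isomorphically onto `T → G`, so the functions trivial on `T`, which are the functions on `Tᶜ`, form
a complement of the image.
-/

section PiComplement

variable {ι : Type*} {G : ι → Type*} [∀ i, Group (G i)]

theorem isComplement'_pi_bot {K : Subgroup (∀ i, G i)} {T : Set ι}
    (eq_one : ∀ k ∈ K, (∀ i ∈ T, k i = 1) → k = 1)
    (exists_eqOn : ∀ f : ∀ i, G i, ∃ k ∈ K, ∀ i ∈ T, k i = f i) :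
    K.IsComplement' (Subgroup.pi T fun _ => ⊥) := by
  apply Subgroup.isComplement'_of_disjoint_and_mul_eq_univ
  · exact Subgroup.disjoint_def.2 fun {k} hkK hkT => eq_one k hkK hkT
  · refine Set.eq_univ_of_forall fun f => ?_
    obtain ⟨k, hkK, hkf⟩ := exists_eqOn f
    refine Set.mem_mul.2 ⟨k, hkK, k⁻¹ * f, fun i hi => ?_, mul_inv_cancel_left k f⟩
    simp [hkf i hi]

variable (G) in
/-- The group of families that are trivial on `T`, identified with the group of families on the
complement of `T`. -/
noncomputable def piBotEquivCompl (T : Set ι) :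
    Subgroup.pi T (fun i => (⊥ : Subgroup (G i))) ≃* (∀ i : ↥Tᶜ, G i) := by
  classical exact
  { toFun f i := f.1 i
    invFun g := ⟨fun i => if h : i ∈ T then 1 else g ⟨i, h⟩, fun i hi => by simp [hi]⟩
    left_inv f := by
      ext i
      by_cases hi : i ∈ T
      · simpa [hi] using (f.2 i hi).symm
      · simp [hi]
    right_inv g := funext fun i => dif_neg i.2
    map_mul' _ _ := rfl }

end PiComplement

theorem reachable_fromRel_of_eqvGen {V : Type*} {R : V → V → Prop} {v w : V}
    (h : Relation.EqvGen R v w) : (SimpleGraph.fromRel R).Reachable v w := by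
  induction h with
  | rel v w hvw =>
    rcases eq_or_ne v w with rfl | hne
    · exact .refl v
    · exact SimpleGraph.Adj.reachable ⟨hne, .inl hvw⟩
  | refl v => exact .refl v
  | symm _ _ _ ih => exact ih.symm
  | trans _ _ _ _ _ ih₁ ih₂ => exact ih₁.trans ih₂

theorem exists_adj_dist_lt {V : Type*} {Γ : SimpleGraph V} {v r : V} (h : Γ.Reachable v r)
    (hne : v ≠ r) : ∃ w, Γ.Adj v w ∧ Γ.dist w r < Γ.dist v r := by
  obtain ⟨p, hp⟩ := h.exists_walk_length_eq_dist
  cases p with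
  | nil => exact absurd rfl hne
  | cons hvw q =>
    refine ⟨_, hvw, ?_⟩
    rw [← hp, SimpleGraph.Walk.length_cons]
    exact Nat.lt_succ_of_le (SimpleGraph.dist_le q)

/-- A spanning tree, rooted at `r`, of the quiver with source map `s` and target map `t`. It is
encoded by the parent of each vertex `v ≠ r` and an arrow, of either orientation, joining `v` to its
parent; connectedness and acyclicity are expressed by a depth function that decreases towards the
root. -/
structure RootedSpanningTree {V E : Type*} (s t : E → V) (r : V) where
  depth : V → ℕ
  parent : {v // v ≠ r} → V
  parentArrow : {v // v ≠ r} → E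
  depth_parent_lt : ∀ v, depth (parent v) < depth v
  endpoints_parentArrow : ∀ v,
    (s (parentArrow v) = parent v ∧ t (parentArrow v) = v) ∨
      (s (parentArrow v) = v ∧ t (parentArrow v) = parent v)

namespace RootedSpanningTree

variable {V E : Type*} {s t : E → V} {r : V}

theorem nonempty_of_eqvGen
    (hr : ∀ v, Relation.EqvGen (fun a b => ∃ e, s e = a ∧ t e = b) v r) :
    Nonempty (RootedSpanningTree s t r) := by
  let Γ := SimpleGraph.fromRel fun a b => ∃ e, s e = a ∧ t e = b
  have exists_parent (v : {v // v ≠ r}) : ∃ w e, Γ.dist w r < Γ.dist v r ∧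
      ((s e = w ∧ t e = v) ∨ (s e = v ∧ t e = w)) := by
    obtain ⟨w, ⟨-, hadj⟩, hlt⟩ := exists_adj_dist_lt (reachable_fromRel_of_eqvGen (hr v)) v.2
    rcases hadj with ⟨e, he⟩ | ⟨e, he⟩
    · exact ⟨w, e, hlt, .inr he⟩
    · exact ⟨w, e, hlt, .inl he⟩
  choose parent parentArrow hlt hends using exists_parent
  exact ⟨⟨(Γ.dist · r), parent, parentArrow, hlt, hends⟩⟩

variable (τ : RootedSpanningTree s t r)

theorem parent_ne (v : {v // v ≠ r}) : τ.parent v ≠ v :=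
  fun h => (τ.depth_parent_lt v).ne (congrArg τ.depth h)

theorem parentArrow_injective : Function.Injective τ.parentArrow := by
  intro v w hvw
  by_contra hne
  have swapped : τ.parent v = w ∧ τ.parent w = v := by
    have hv := τ.endpoints_parentArrow v
    have hw := τ.endpoints_parentArrow w
    rw [hvw] at hv
    grind
  have hv := τ.depth_parent_lt v
  have hw := τ.depth_parent_lt w
  rw [swapped.1] at hv
  rw [swapped.2] at hw
  exact hv.asymm hw

/-- The arrows of the tree. -/
def arrows : Set E := Set.range τ.parentArrow

open Classical in
/-- The bijection between the vertices and the arrows of the tree together with one extra point,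
which stands for the root. -/
noncomputable def optionArrowsEquiv : Option τ.arrows ≃ V :=
  (Equiv.ofInjective _ τ.parentArrow_injective).symm.optionCongr.trans (Equiv.optionSubtypeNe r)

variable {G : Type*} [CommGroup G]

open Classical in
/-- The function on vertices with value `1` at the root whose image under `gammaHom` agrees with `f`
on the arrows of the tree. -/
noncomputable def potential (f : E → G) (v : V) : G :=
  if hv : v = r then 1
  else
    (if t (τ.parentArrow ⟨v, hv⟩) = v then f (τ.parentArrow ⟨v, hv⟩)
      else (f (τ.parentArrow ⟨v, hv⟩))⁻¹) * potential f (τ.parent ⟨v, hv⟩)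
termination_by τ.depth v
decreasing_by exact τ.depth_parent_lt ⟨v, hv⟩

theorem gammaHom_potential (f : E → G) {e : E} (he : e ∈ τ.arrows) :
    gammaHom s t G (τ.potential f) e = f e := by
  obtain ⟨v, rfl⟩ := he
  change τ.potential f (t _) * (τ.potential f (s _))⁻¹ = _
  rcases τ.endpoints_parentArrow v with ⟨hs, ht⟩ | ⟨hs, ht⟩
  · rw [hs, ht, potential, dif_neg v.2, if_pos ht, mul_inv_cancel_right]
  · have hne : t (τ.parentArrow v) ≠ v := ht ▸ τ.parent_ne v
    rw [hs, ht, potential.eq_def τ f v, dif_neg v.2, if_neg hne]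
    simp

theorem apply_eq_apply_root_of_gammaHom_eq_one {lam : V → G}
    (hlam : ∀ e ∈ τ.arrows, gammaHom s t G lam e = 1) (v : V) : lam v = lam r := by
  by_cases hv : v = r
  · rw [hv]
  have edge : lam (t (τ.parentArrow ⟨v, hv⟩)) = lam (s (τ.parentArrow ⟨v, hv⟩)) :=
    mul_inv_eq_one.1 (hlam _ ⟨_, rfl⟩)
  have parent : lam v = lam (τ.parent ⟨v, hv⟩) := by
    rcases τ.endpoints_parentArrow ⟨v, hv⟩ with ⟨hs, ht⟩ | ⟨hs, ht⟩
    · rwa [hs, ht] at edge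
    · rw [hs, ht] at edge
      exact edge.symm
  exact parent.trans (apply_eq_apply_root_of_gammaHom_eq_one hlam _)
termination_by τ.depth v
decreasing_by exact τ.depth_parent_lt ⟨v, hv⟩

theorem isComplement'_range_gammaHom :
    (gammaHom s t G).range.IsComplement' (Subgroup.pi τ.arrows fun _ => ⊥) := by
  apply isComplement'_pi_bot
  · rintro _ ⟨lam, rfl⟩ hlam
    have const := τ.apply_eq_apply_root_of_gammaHom_eq_one hlam
    exact funext fun e => mul_inv_eq_one.2 ((const (t e)).trans (const (s e)).symm)
  · exact fun f => ⟨_, ⟨τ.potential f, rfl⟩, fun _ => τ.gammaHom_potential f⟩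

end RootedSpanningTree

theorem card_compl_of_option_equiv {V E : Type*} [Fintype V] [Fintype E] {T : Set E}
    [Fintype ↥Tᶜ] (φ : Option T ≃ V) :
    Fintype.card ↥Tᶜ = Fintype.card E + 1 - Fintype.card V := by
  classical
  rw [Fintype.card_compl_set, ← Fintype.card_congr φ, Fintype.card_option, Nat.add_sub_add_right]

theorem stmt8_general {V E : Type*} [Nonempty V] (s t : E → V) (G : Type*) [CommGroup G]
    (hconn : ∀ v w : V, Relation.EqvGen (fun a b => ∃ e, s e = a ∧ t e = b) v w) :
    ∃ T : Set E, Nonempty (Option T ≃ V) ∧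
      Nonempty ((E → G) ⧸ (gammaHom s t G).range ≃* (↥Tᶜ → G)) ∧
      ∃ H : Subgroup (E → G), IsCompl (gammaHom s t G).range H := by
  obtain ⟨r⟩ := ‹Nonempty V›
  obtain ⟨τ⟩ := RootedSpanningTree.nonempty_of_eqvGen fun v => hconn v r
  have hcompl := τ.isComplement'_range_gammaHom (G := G)
  exact ⟨τ.arrows, ⟨τ.optionArrowsEquiv⟩,
    ⟨hcompl.symm.QuotientMulEquiv.trans (piBotEquivCompl (fun _ => G) τ.arrows)⟩,
    _, hcompl.isCompl⟩

/-- For a connected quiver with nonempty finite vertex set `V` and finite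
arrow set `E`, and a commutative group `G`, the quotient `(E → G) / im γ` is
isomorphic to `G^{|E| − |V| + 1}`, and `im γ` is a direct factor of
`(E → G)`. -/
theorem stmt8 {V E : Type*} [Fintype V] [Fintype E] [Nonempty V]
    (s t : E → V) (G : Type*) [CommGroup G]
    (hconn : ∀ v w : V, Relation.EqvGen (fun a b => ∃ e, s e = a ∧ t e = b) v w) :
    Nonempty ((E → G) ⧸ (gammaHom s t G).range ≃*
        (Fin (Fintype.card E + 1 - Fintype.card V) → G)) ∧
    ∃ H : Subgroup (E → G), IsCompl (gammaHom s t G).range H := by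
  classical
  obtain ⟨T, ⟨φ⟩, ⟨ψ⟩, hH⟩ := stmt8_general s t G hconn
  have e := Fintype.equivFinOfCardEq (card_compl_of_option_equiv φ)
  exact ⟨⟨ψ.trans (MulEquiv.arrowCongr e (.refl G))⟩, hH⟩
end

section
/- Let G be a commutative group. Then the kernel of ρ equals the range of γ̃; that is, for α : (ℤ/3ℤ)³ → G one has ρ(α) = 1 if and only if there exists λ : ℤ/3ℤ × ℤ/3ℤ → G with α(i, j, k) = λ(i + k, j + 1) · λ(i, j)⁻¹ for all i, j, k. (This is the exactness at (G_m)^{Q̃₁} of the paper's exact sequence 1 → G_m → (G_m)^{Q̃₀} → (G_m)^{Q̃₁} → K → 1, where K = im ρ.) -/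
/-!
Recording an arrow by its endpoints instead of by its source and displacement turns `Q̃` into the
complete tripartite quiver on three layers arranged cyclically, one arrow for every pair of vertices
in consecutive layers. A labelling of the arrows that is trivial on every triangle is a coboundary:
normalise the potential to be `1` at a base vertex `p₀` of the first layer. The arrows leaving
`p₀` then fix it on the second layer, the arrows entering `p₀` fix it on the third, and the arrows
from a base vertex of the third layer fix it on the first. Triangles through the base vertices give
the remaining labels.
-/

theorem triangle_eq_one_iff_exists_potential {P Q R G : Type*} [Group G]
    [Nonempty P] [Nonempty Q] [Nonempty R] (a : P → Q → G) (b : Q → R → G) (c : R → P → G) :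
    (∀ p q r, c r p * b q r * a p q = 1) ↔
      ∃ (x : P → G) (y : Q → G) (z : R → G),
        (∀ p q, a p q = y q * (x p)⁻¹) ∧ (∀ q r, b q r = z r * (y q)⁻¹) ∧
          ∀ r p, c r p = x p * (z r)⁻¹ := by
  constructor
  · intro h
    obtain ⟨p₀⟩ := ‹Nonempty P›
    obtain ⟨q₀⟩ := ‹Nonempty Q›
    obtain ⟨r₀⟩ := ‹Nonempty R›
    have hb (q r) : b q r = (c r p₀)⁻¹ * (a p₀ q)⁻¹ :=
      eq_mul_inv_of_mul_eq (eq_inv_of_mul_eq_one_right (by rw [← mul_assoc, h]))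
    have ha (p q) : a p q = a p₀ q * (c r₀ p * (c r₀ p₀)⁻¹)⁻¹ := by
      rw [eq_inv_of_mul_eq_one_right (h p q r₀), hb]
      group
    have hc (r p) : c r p = c r₀ p * (c r₀ p₀)⁻¹ * c r p₀ := by
      have hcb : c r p * b q₀ r = (a p q₀)⁻¹ := eq_inv_of_mul_eq_one_left (h p q₀ r)
      rw [eq_mul_inv_of_mul_eq hcb, ha, hb]
      group
    exact ⟨fun p ↦ c r₀ p * (c r₀ p₀)⁻¹, a p₀, fun r ↦ (c r p₀)⁻¹, ha, hb,
      by simpa only [inv_inv] using hc⟩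
  · rintro ⟨x, y, z, ha, hb, hc⟩ p q r
    rw [ha, hb, hc]
    group

theorem forall_zmod_three {p : ZMod 3 → Prop} : (∀ j, p j) ↔ p 0 ∧ p 1 ∧ p 2 :=
  Fin.forall_fin_succ.trans (and_congr_right' Fin.forall_fin_two)

section Displacement

variable {A G : Type*} [AddCommGroup A] [Group G]

theorem cycle_eq_one_iff_triangle_eq_one (α : A × ZMod 3 × A → G) :
    (∀ i j k : A, α (i + j + k, 2, -j - k) * α (i + j, 1, k) * α (i, 0, j) = 1) ↔
      ∀ p q r : A, α (r, 2, p - r) * α (q, 1, r - q) * α (p, 0, q - p) = 1 := by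
  refine forall_congr' fun p ↦ (Equiv.addLeft p).forall_congr fun {j} ↦
    (Equiv.addLeft (p + j)).forall_congr fun {k} ↦ ?_
  have hclose : p - (p + j + k) = -j - k := by abel
  simp only [Equiv.coe_addLeft, hclose, add_sub_cancel_left]

theorem eq_coboundary_iff_layers (α : A × ZMod 3 × A → G) (lam : A × ZMod 3 → G) :
    (∀ i j k, α (i, j, k) = lam (i + k, j + 1) * (lam (i, j))⁻¹) ↔
      (∀ p q, α (p, 0, q - p) = lam (q, 1) * (lam (p, 0))⁻¹) ∧
        (∀ q r, α (q, 1, r - q) = lam (r, 2) * (lam (q, 1))⁻¹) ∧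
          ∀ r p, α (r, 2, p - r) = lam (p, 0) * (lam (r, 2))⁻¹ :=
  calc
    _ ↔ ∀ j i l, α (i, j, l - i) = lam (l, j + 1) * (lam (i, j))⁻¹ :=
      forall_comm.trans <| forall₂_congr fun j i ↦ (Equiv.addLeft i).forall_congr fun {k} ↦ by
        rw [Equiv.coe_addLeft, add_sub_cancel_left]
    _ ↔ _ := forall_zmod_three

theorem exists_potential_iff_exists_layer_potentials (α : A × ZMod 3 × A → G) :
    (∃ lam : A × ZMod 3 → G,
        ∀ i j k, α (i, j, k) = lam (i + k, j + 1) * (lam (i, j))⁻¹) ↔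
      ∃ x y z : A → G,
        (∀ p q, α (p, 0, q - p) = y q * (x p)⁻¹) ∧ (∀ q r, α (q, 1, r - q) = z r * (y q)⁻¹) ∧
          ∀ r p, α (r, 2, p - r) = x p * (z r)⁻¹ := by
  simp only [eq_coboundary_iff_layers]
  constructor
  · rintro ⟨lam, h⟩
    exact ⟨fun v ↦ lam (v, 0), fun v ↦ lam (v, 1), fun v ↦ lam (v, 2), h⟩
  · rintro ⟨x, y, z, h⟩
    -- `ZMod 3` unfolds to `Fin 3`, so its elements index vectors of length three.
    exact ⟨fun v ↦ ![x, y, z] v.2 v.1, h⟩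

end Displacement

theorem stmt9_general {A G : Type*} [AddCommGroup A] [Group G] (α : A × ZMod 3 × A → G) :
    (∀ i j k : A, α (i + j + k, 2, -j - k) * α (i + j, 1, k) * α (i, 0, j) = 1) ↔
      ∃ lam : A × ZMod 3 → G,
        ∀ (i : A) (j : ZMod 3) (k : A), α (i, j, k) = lam (i + k, j + 1) * (lam (i, j))⁻¹ := by
  rw [cycle_eq_one_iff_triangle_eq_one, exists_potential_iff_exists_layer_potentials]
  exact triangle_eq_one_iff_exists_potential (fun p q ↦ α (p, 0, q - p))
    (fun q r ↦ α (q, 1, r - q)) fun r p ↦ α (r, 2, p - r)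

/-- Exactness at `(G_m)^{Q̃₁}`: for a commutative group `G` and
`α : (ℤ/3ℤ)³ → G`, one has `ρ(α) = 1` if and only if `α = γ̃(λ)` for some
`λ : ℤ/3ℤ × ℤ/3ℤ → G`, where
`ρ(α)(i,j,k) = α(i+j+k, 2, −j−k) · α(i+j, 1, k) · α(i, 0, j)` and
`γ̃(λ)(i,j,k) = λ(i+k, j+1) · λ(i,j)⁻¹`. -/
theorem stmt9 (G : Type*) [CommGroup G] (α : ZMod 3 × ZMod 3 × ZMod 3 → G) :
    (∀ i j k : ZMod 3,
        α (i + j + k, 2, -j - k) * α (i + j, 1, k) * α (i, 0, j) = 1) ↔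
    ∃ lam : ZMod 3 × ZMod 3 → G,
      ∀ i j k : ZMod 3, α (i, j, k) = lam (i + k, j + 1) * (lam (i, j))⁻¹ :=
  stmt9_general α
end

section
/- Let G be a commutative group. Then the range of ρ (the image subgroup K = im ρ inside the group of functions (ℤ/3ℤ)³ → G) is isomorphic, as a group, to G^{19}, i.e., to the group of functions from a 19-element set to G. (This is the paper's claim that K ≅ (G_m)^{|Q̃₁| − |Q̃₀| + 1} = (G_m)^{19}.) -/
/-- The group homomorphism `ρ : (G^{Q̃₁}) → (G^{scrC₃(Q̃)})` (both source and
target being functions `(ℤ/3ℤ)³ → G`), given by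
`ρ(α)(i,j,k) = α(i+j+k, 2, −j−k) · α(i+j, 1, k) · α(i, 0, j)`. -/
def rhoHom (G : Type*) [CommGroup G] :
    ((ZMod 3 × ZMod 3 × ZMod 3) → G) →* ((ZMod 3 × ZMod 3 × ZMod 3) → G) where
  toFun α := fun c =>
    α (c.1 + c.2.1 + c.2.2, 2, -c.2.1 - c.2.2) * α (c.1 + c.2.1, 1, c.2.2)
      * α (c.1, 0, c.2.1)
  map_one' := by ext c; simp
  map_mul' a b := by
    ext c
    simp only [Pi.mul_apply]
    ac_rfl

/-!
Record the cycle `(i, j, k)` by the first coordinates `p = i`, `q = i + j`, `r = i + j + k` of its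
vertices. Then `ρ` becomes the map sending arrow labels `a`, `b`, `c` to the function
`(p, q, r) ↦ a (p, q) * b (q, r) * c (r, p)`. Such products have trivial mixed third differences, so
inclusion–exclusion recovers all their values from those at triples having a coordinate equal to
`0`. Conversely, the same formula extends any function on these triples to a product of this shape.
There are `3³ - 2³ = 19` such triples, which is `|Q̃₁| - |Q̃₀| + 1` since
`n³ - (n - 1)³ = 3 * n² - 3 * n + 1`.
-/

section Triangles

variable {X Y Z G : Type*} [CommGroup G]

/-- The analogue of `ρ` for the complete cyclic tripartite quiver with vertex classes `X`, `Y`, `Z`: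
labels of the arrows `X → Y`, `Y → Z`, `Z → X` are multiplied along each oriented triangle. -/
def triangleHom (X Y Z G : Type*) [CommGroup G] :
    (X × Y → G) × (Y × Z → G) × (Z × X → G) →* (X × Y × Z → G) where
  toFun a v := a.1 (v.1, v.2.1) * a.2.1 (v.2.1, v.2.2) * a.2.2 (v.2.2, v.1)
  map_one' := by ext; simp
  map_mul' a b := by
    ext
    simp only [Prod.fst_mul, Prod.snd_mul, Pi.mul_apply, mul_mul_mul_comm]

theorem triangleHom_apply (a : (X × Y → G) × (Y × Z → G) × (Z × X → G)) (x : X) (y : Y) (z : Z) :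
    triangleHom X Y Z G a (x, y, z) = a.1 (x, y) * a.2.1 (y, z) * a.2.2 (z, x) :=
  rfl

/-- The triangles through at least one of the base vertices `x₀`, `y₀`, `z₀`; values on them serve
as coordinates on the range of `triangleHom`. -/
def baseTriangles (x₀ : X) (y₀ : Y) (z₀ : Z) : Set (X × Y × Z) :=
  {v | v.1 = x₀ ∨ v.2.1 = y₀ ∨ v.2.2 = z₀}

variable (x₀ : X) (y₀ : Y) (z₀ : Z)

theorem compl_baseTriangles :
    (baseTriangles x₀ y₀ z₀)ᶜ = ({x₀}ᶜ : Set X) ×ˢ ({y₀}ᶜ : Set Y) ×ˢ ({z₀}ᶜ : Set Z) := by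
  ext
  simp [baseTriangles]

theorem ncard_baseTriangles [Finite X] [Finite Y] [Finite Z] :
    (baseTriangles x₀ y₀ z₀).ncard = Nat.card X * (Nat.card Y * Nat.card Z) -
      (Nat.card X - 1) * ((Nat.card Y - 1) * (Nat.card Z - 1)) := by
  rw [← compl_compl (baseTriangles x₀ y₀ z₀), Set.ncard_compl, compl_baseTriangles]
  simp only [Set.ncard_prod, Set.ncard_compl {x₀}, Set.ncard_compl {y₀}, Set.ncard_compl {z₀},
    Set.ncard_singleton, Nat.card_prod]

/-- The inclusion–exclusion extension of the restriction of `f` to `baseTriangles x₀ y₀ z₀`; the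
other values of `f` are ignored. -/
def baseExtension (f : X × Y × Z → G) : X × Y × Z → G := fun (x, y, z) =>
  f (x, y, z₀) * f (x₀, y, z) * f (x, y₀, z) * f (x₀, y₀, z₀) /
    (f (x, y₀, z₀) * f (x₀, y, z₀) * f (x₀, y₀, z))

variable {x₀ y₀ z₀} in
theorem baseExtension_congr {f g : X × Y × Z → G} (h : Set.EqOn f g (baseTriangles x₀ y₀ z₀)) :
    baseExtension x₀ y₀ z₀ f = baseExtension x₀ y₀ z₀ g := by
  have hx (y z) : f (x₀, y, z) = g (x₀, y, z) := h (.inl rfl)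
  have hy (x z) : f (x, y₀, z) = g (x, y₀, z) := h (.inr (.inl rfl))
  have hz (x y) : f (x, y, z₀) = g (x, y, z₀) := h (.inr (.inr rfl))
  ext ⟨x, y, z⟩
  simp only [baseExtension, hx, hy, hz]

theorem baseExtension_eqOn (f : X × Y × Z → G) :
    Set.EqOn (baseExtension x₀ y₀ z₀ f) f (baseTriangles x₀ y₀ z₀) := by
  rintro ⟨x, y, z⟩ (rfl | rfl | rfl) <;>
    simp only [baseExtension, div_eq_iff_eq_mul] <;> ac_rfl

theorem baseExtension_triangleHom (a : (X × Y → G) × (Y × Z → G) × (Z × X → G)) :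
    baseExtension x₀ y₀ z₀ (triangleHom X Y Z G a) = triangleHom X Y Z G a := by
  ext ⟨x, y, z⟩
  simp only [baseExtension, triangleHom_apply, div_eq_iff_eq_mul]
  ac_rfl

theorem baseExtension_mem_range (f : X × Y × Z → G) :
    baseExtension x₀ y₀ z₀ f ∈ (triangleHom X Y Z G).range := by
  let a : (X × Y → G) × (Y × Z → G) × (Z × X → G) :=
    (fun (x, y) => f (x, y, z₀),
      fun (y, z) => f (x₀, y, z) / f (x₀, y, z₀),
      fun (z, x) => f (x, y₀, z) * f (x₀, y₀, z₀) / (f (x, y₀, z₀) * f (x₀, y₀, z)))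
  refine ⟨a, ?_⟩
  ext ⟨x, y, z⟩
  simp only [a, triangleHom_apply, baseExtension, mul_div_assoc', div_mul_eq_mul_div,
    div_div]
  congr 1 <;> ac_rfl

/-- Restriction of functions in the range of `triangleHom` to the base triangles. -/
def restrictBaseTriangles : (triangleHom X Y Z G).range →* (baseTriangles x₀ y₀ z₀ → G) where
  toFun f v := f.1 v
  map_one' := rfl
  map_mul' _ _ := rfl

theorem restrictBaseTriangles_injective :
    Function.Injective (restrictBaseTriangles (G := G) x₀ y₀ z₀) := by
  rintro ⟨_, a, rfl⟩ ⟨_, b, rfl⟩ hab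
  have hEqOn : Set.EqOn (triangleHom X Y Z G a) (triangleHom X Y Z G b)
      (baseTriangles x₀ y₀ z₀) := fun v hv => congrFun hab ⟨v, hv⟩
  ext1
  simpa only [baseExtension_triangleHom] using baseExtension_congr hEqOn

theorem restrictBaseTriangles_surjective :
    Function.Surjective (restrictBaseTriangles (G := G) x₀ y₀ z₀) := by
  intro g
  let f : X × Y × Z → G := Function.extend Subtype.val g 1
  refine ⟨⟨baseExtension x₀ y₀ z₀ f, baseExtension_mem_range x₀ y₀ z₀ f⟩, ?_⟩
  ext v
  calc baseExtension x₀ y₀ z₀ f v = f v := baseExtension_eqOn x₀ y₀ z₀ f v.2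
    _ = g v := Subtype.val_injective.extend_apply g 1 v

/-- A function in the range of `triangleHom` is freely determined by its values on the base
triangles. -/
noncomputable def triangleHomRangeEquiv :
    (triangleHom X Y Z G).range ≃* (baseTriangles x₀ y₀ z₀ → G) :=
  MulEquiv.ofBijective (restrictBaseTriangles x₀ y₀ z₀)
    ⟨restrictBaseTriangles_injective x₀ y₀ z₀, restrictBaseTriangles_surjective x₀ y₀ z₀⟩

end Triangles

/-- The cycle with starting point `i` and steps `j`, `k`, recorded by its vertices. -/
@[simps]
def cycleVertices (A : Type*) [AddCommGroup A] : A × A × A ≃ A × A × A where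
  toFun c := (c.1, c.1 + c.2.1, c.1 + c.2.1 + c.2.2)
  invFun v := (v.1, v.2.1 - v.1, v.2.2 - v.2.1)
  left_inv c := by simp
  right_inv v := by simp

section RollUp

variable (G : Type*) [CommGroup G]

/-- Sorts the labels of the arrows of `Q̃` by the second coordinate `0`, `1`, `2` of their sources,
and indexes them by the first coordinates of source and target. -/
def arrowLabels : (ZMod 3 × ZMod 3 × ZMod 3 → G) →*
    (ZMod 3 × ZMod 3 → G) × (ZMod 3 × ZMod 3 → G) × (ZMod 3 × ZMod 3 → G) where
  toFun α := (fun (p, q) => α (p, 0, q - p), fun (q, r) => α (q, 1, r - q),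
    fun (r, p) => α (r, 2, p - r))
  map_one' := rfl
  map_mul' _ _ := rfl

theorem arrowLabels_surjective : Function.Surjective (arrowLabels G) := by
  rintro ⟨a, b, c⟩
  let α : ZMod 3 × ZMod 3 × ZMod 3 → G := fun (i, j, k) => ![a, b, c] j (i, i + k)
  refine ⟨α, ?_⟩
  have hα (s : Fin 3) (p q : ZMod 3) : α (p, s, q - p) = ![a, b, c] s (p, q) :=
    congrArg (fun t => ![a, b, c] s (p, t)) (add_sub_cancel p q)
  exact Prod.ext (funext fun _ => hα 0 _ _)
    (Prod.ext (funext fun _ => hα 1 _ _) (funext fun _ => hα 2 _ _))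

variable {G} in
theorem rhoHom_apply_eq_triangleHom (α : ZMod 3 × ZMod 3 × ZMod 3 → G)
    (c : ZMod 3 × ZMod 3 × ZMod 3) :
    rhoHom G α c =
      triangleHom (ZMod 3) (ZMod 3) (ZMod 3) G (arrowLabels G α) (cycleVertices (ZMod 3) c) := by
  obtain ⟨i, j, k⟩ := c
  have h_return : i - (i + j + k) = -j - k := by abel
  simp only [cycleVertices_apply, triangleHom_apply, arrowLabels, rhoHom, MonoidHom.coe_mk,
    OneHom.coe_mk, add_sub_cancel_left, h_return]
  ac_rfl

/-- Reindexing of functions on the cycles of `Q̃` by the vertices of the cycles. -/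
def cycleFunctionEquiv : (ZMod 3 × ZMod 3 × ZMod 3 → G) ≃* (ZMod 3 × ZMod 3 × ZMod 3 → G) :=
  MulEquiv.arrowCongr (cycleVertices (ZMod 3)) (MulEquiv.refl G)

theorem cycleFunctionEquiv_comp_rhoHom :
    (cycleFunctionEquiv G).toMonoidHom.comp (rhoHom G) =
      (triangleHom (ZMod 3) (ZMod 3) (ZMod 3) G).comp (arrowLabels G) := by
  refine MonoidHom.ext fun α => funext fun v => ?_
  simpa [cycleFunctionEquiv] using rhoHom_apply_eq_triangleHom α ((cycleVertices (ZMod 3)).symm v)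

theorem map_range_rhoHom :
    (rhoHom G).range.map (cycleFunctionEquiv G).toMonoidHom =
      (triangleHom (ZMod 3) (ZMod 3) (ZMod 3) G).range := by
  rw [MonoidHom.map_range, cycleFunctionEquiv_comp_rhoHom, MonoidHom.range_comp,
    MonoidHom.range_eq_top.2 (arrowLabels_surjective G), ← MonoidHom.range_eq_map]

/-- In vertex coordinates, the image `K` of `ρ` is the range of `triangleHom`. -/
def rhoHomRangeEquiv :
    (rhoHom G).range ≃* (triangleHom (ZMod 3) (ZMod 3) (ZMod 3) G).range :=
  ((cycleFunctionEquiv G).subgroupMap (rhoHom G).range).trans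
    (MulEquiv.subgroupCongr (map_range_rhoHom G))

end RollUp

/-- The image subgroup `K = im ρ` inside the group of functions
`(ℤ/3ℤ)³ → G` is isomorphic to `G^{19}`. -/
theorem stmt10 (G : Type*) [CommGroup G] :
    Nonempty ((rhoHom G).range ≃* (Fin 19 → G)) := by
  have hcard : Nat.card (baseTriangles (0 : ZMod 3) (0 : ZMod 3) (0 : ZMod 3)) = 19 := by
    simp [Nat.card_coe_set_eq, ncard_baseTriangles]
  exact ⟨(rhoHomRangeEquiv G).trans <| (triangleHomRangeEquiv 0 0 0).trans <|
    MulEquiv.arrowCongr (Finite.equivFinOfCardEq hcard) (MulEquiv.refl G)⟩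
end

section
/- Define the linear map ρ̂ : ((ℤ/3ℤ)³ → ℝ) → ((ℤ/3ℤ)³ → ℝ) by ρ̂(y)(i, j, k) = y(i + j + k, 2, −j − k) + y(i + j, 1, k) + y(i, 0, j) (the map on cocharacter lattices induced by ρ). If x : (ℤ/3ℤ)³ → ℝ satisfies x(c) ≥ 0 for all c and Σ_c x(c) · ρ̂(y)(c) = 0 for every y : (ℤ/3ℤ)³ → ℝ, then x = 0. (This is the strong convexity of the effective cone A⁺(M) in the paper's Lemma 5.3: the cone generated by the restrictions of the coordinate functionals e_c to the image lattice L = im ρ̂ is salient, which implies projectivity of the GIT quotients M̄_χ.) -/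
/-- The linear map `ρ̂` on `(ℤ/3ℤ)³ → ℝ` induced by `ρ` on cocharacter
lattices: `ρ̂(y)(i,j,k) = y(i+j+k, 2, −j−k) + y(i+j, 1, k) + y(i, 0, j)`. -/
def rhoHat (y : ZMod 3 × ZMod 3 × ZMod 3 → ℝ) : ZMod 3 × ZMod 3 × ZMod 3 → ℝ :=
  fun c =>
    y (c.1 + c.2.1 + c.2.2, 2, -c.2.1 - c.2.2) + y (c.1 + c.2.1, 1, c.2.2)
      + y (c.1, 0, c.2.1)

theorem eq_zero_of_sum_mul_eq_zero_of_pos {ι R : Type*} [Fintype ι]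
    [NonUnitalNonAssocSemiring R] [PartialOrder R] [IsOrderedAddMonoid R] [PosMulStrictMono R]
    {x w : ι → R} (hx : ∀ i, 0 ≤ x i) (hw : ∀ i, 0 < w i) (h : ∑ i, x i * w i = 0) :
    x = 0 := by
  have hterm : ∀ i, x i * w i = 0 := by
    simpa using (Finset.sum_eq_zero_iff_of_nonneg
      fun i _ => mul_nonneg (hx i) (hw i).le).mp h
  funext i
  by_contra hne
  have hxi : 0 < x i := (hx i).lt_of_ne' hne
  exact (mul_pos hxi (hw i)).ne' (hterm i)

theorem rhoHat_pos {y : ZMod 3 × ZMod 3 × ZMod 3 → ℝ} (hy : ∀ c, 0 < y c)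
    (c : ZMod 3 × ZMod 3 × ZMod 3) : 0 < rhoHat y c :=
  add_pos (add_pos (hy _) (hy _)) (hy _)

theorem stmt12_general {x y : ZMod 3 × ZMod 3 × ZMod 3 → ℝ} (hx : ∀ c, 0 ≤ x c)
    (hy : ∀ c, 0 < y c) (horth : ∑ c, x c * rhoHat y c = 0) : x = 0 :=
  eq_zero_of_sum_mul_eq_zero_of_pos hx (rhoHat_pos hy) horth

/-- Strong convexity of the effective cone: if `x : (ℤ/3ℤ)³ → ℝ` is
pointwise nonnegative and orthogonal to the image of `ρ̂`, then `x = 0`. -/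
theorem stmt12 (x : ZMod 3 × ZMod 3 × ZMod 3 → ℝ)
    (hx : ∀ c, 0 ≤ x c)
    (horth : ∀ y : ZMod 3 × ZMod 3 × ZMod 3 → ℝ,
      ∑ c : ZMod 3 × ZMod 3 × ZMod 3, x c * rhoHat y c = 0) :
    x = 0 :=
  stmt12_general hx (fun _ => one_pos) (horth 1)
end

section
/- Let k be a field, let V and E be types with maps s, t : E → V (a quiver), and let c : E → kˣ be a family of nonzero scalars, viewed as the representation of the quiver assigning the one-dimensional k-module k to each vertex and multiplication by c(e) to each arrow e. Then the assignment W ↦ { v ∈ V : W(v) = ⊤ } is a bijection from the set of subrepresentations, i.e., families W : V → Submodule k k such that for every arrow e the image of W(s e) under multiplication by c(e) is contained in W(t e), onto the set of subsets S ⊆ V such that for every arrow e, s e ∈ S implies t e ∈ S. (This is the paper's claim that submodules of a kQ-module of dimension vector (1,…,1) attached to a point of the dense torus correspond bijectively to arrow-closed subsets of the vertex set.) -/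
/-!
A submodule of a simple module is `⊥` or `⊤`, so a family of submodules of simple modules is
determined by the set of vertices at which it is `⊤`, and every set of vertices arises. By Schur's
lemma a nonzero map between simple modules is surjective; compatibility of a family with such a map
therefore says exactly that if the family is `⊤` at the source, then it is `⊤` at the target.
-/

theorem bijective_setOf_eq_top {ι : Type*} {α : ι → Type*} [∀ i, LE (α i)]
    [∀ i, BoundedOrder (α i)] [∀ i, IsSimpleOrder (α i)] :
    Function.Bijective fun a : ∀ i, α i => {i | a i = ⊤} := by
  constructor
  · intro a b hab
    funext i
    have top_iff : a i = ⊤ ↔ b i = ⊤ := Set.ext_iff.mp hab i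
    rcases eq_bot_or_eq_top (a i) with ha | ha
    · rcases eq_bot_or_eq_top (b i) with hb | hb
      · rw [ha, hb]
      · rw [top_iff.mpr hb, hb]
    · rw [ha, top_iff.mp ha]
  · intro S
    classical
    refine ⟨fun i => if i ∈ S then ⊤ else ⊥, Set.ext fun i => ?_⟩
    simp [IsSimpleOrder.bot_ne_top]

theorem submodule_map_le_iff_top_imp_top {R M N : Type*} [Ring R] [AddCommGroup M] [Module R M]
    [AddCommGroup N] [Module R N] [IsSimpleModule R M] {f : M →ₗ[R] N}
    (hf : Function.Surjective f) {p : Submodule R M} {q : Submodule R N} :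
    p.map f ≤ q ↔ (p = ⊤ → q = ⊤) := by
  rcases eq_bot_or_eq_top p with rfl | rfl
  · simp
  · simp [LinearMap.range_eq_top.mpr hf]

theorem stmt13_general {R V E : Type*} [Ring R] {M : V → Type*} [∀ v, AddCommGroup (M v)]
    [∀ v, Module R (M v)] [∀ v, IsSimpleModule R (M v)] (s t : E → V)
    (φ : ∀ e, M (s e) →ₗ[R] M (t e)) (hφ : ∀ e, φ e ≠ 0) :
    Set.BijOn (fun W : ∀ v, Submodule R (M v) => {v | W v = ⊤})
      {W : ∀ v, Submodule R (M v) | ∀ e, (W (s e)).map (φ e) ≤ W (t e)}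
      {S : Set V | ∀ e, s e ∈ S → t e ∈ S} := by
  have map_le_iff (W : ∀ v, Submodule R (M v)) (e : E) :
      (W (s e)).map (φ e) ≤ W (t e) ↔ (W (s e) = ⊤ → W (t e) = ⊤) :=
    submodule_map_le_iff_top_imp_top (LinearMap.surjective_of_ne_zero (hφ e))
  have bijective : Function.Bijective fun W : ∀ v, Submodule R (M v) => {v | W v = ⊤} :=
    bijective_setOf_eq_top
  simp only [map_le_iff]
  exact bijective.bijOn_preimage (t := {S | ∀ e, s e ∈ S → t e ∈ S})

/-- Let `(V, E, s, t)` be a quiver, `k` a field, and `c : E → kˣ` a family of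
nonzero scalars, viewed as the representation of the quiver assigning the
one-dimensional module `k` to each vertex and multiplication by `c e` to each
arrow `e`.  The assignment `W ↦ {v | W v = ⊤}` is a bijection from the set of
subrepresentations (families `W : V → Submodule k k` with
`(c e) • W(s e) ≤ W(t e)` for every arrow `e`) onto the set of arrow-closed
subsets of `V`. -/
theorem stmt13 (k : Type*) [Field k] {V E : Type*} (s t : E → V) (c : E → kˣ) :
    Set.BijOn (fun W : V → Submodule k k => {v | W v = ⊤})
      {W : V → Submodule k k |
        ∀ e, (W (s e)).map (((c e : k) • LinearMap.id : k →ₗ[k] k)) ≤ W (t e)}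
      {S : Set V | ∀ e, s e ∈ S → t e ∈ S} :=
  stmt13_general s t (fun e => (c e : k) • LinearMap.id)
    fun e => smul_ne_zero (c e).ne_zero (one_ne_zero (α := Module.End k k))
end
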